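/- (Intermediate bound in the critical case.) Let φ : ℕ → ℝ with φ_i ≥ 0, φ_0 = 0, ∑_{i=1}^∞ φ_i = 1, and assume there exists K > 0 such that N^{1/2} ∑_{i=N}^∞ φ_i → K as N → ∞. Set δ = K Γ(1/2)/(1/2), and let (a_n)_{n≥1} satisfy 0 < a_n < 1 and n^{1/2}(1−a_n) → λδ for some λ > 0. Let (ε_k)_{k≥0} be iid real random variables with E[ε_0] = 0 and E[ε_0²] = 1, and for each n define y^n_0 = ε_0 and y^n_k = ε_k + ∑_{i=1}^k a_n φ_i y^n_{k−i} for k ≥ 1. Then there exists c > 0 such that for every n ≥ 1 and every k ≥ 0, E[(y^n_k)²] ≤ c |log(1−a_n)|. -/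

import Mathlib

open MeasureTheory ProbabilityTheory Filter Set

/-- Convolution powers of a sequence. -/
noncomputable def convPow (φ : ℕ → ℝ) : ℕ → ℕ → ℝ
  | 0 => fun i => if i = 0 then 1 else 0
  | (l + 1) => fun k => ∑ j ∈ Finset.range (k + 1), convPow φ l j * φ (k - j)

/-- ψ^a_i = ∑_{l=0}^∞ a^l (φ^{*l})_i. -/
noncomputable def psiSeq (a : ℝ) (φ : ℕ → ℝ) (i : ℕ) : ℝ :=
  ∑' l : ℕ, a ^ l * convPow φ l i

/-- Fourier transform of a sequence indexed by ℕ. -/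
noncomputable def fourierSeq (f : ℕ → ℝ) (z : ℝ) : ℂ :=
  ∑' k : ℕ, (f k : ℂ) * Complex.exp (-(2 * Real.pi * Complex.I * k * z))

/-- Mittag-Leffler function E_{α,α}. -/
noncomputable def mittagLeffler (α u : ℝ) : ℝ :=
  ∑' k : ℕ, u ^ k / Real.Gamma (α * k + α)

/-- f^{α,λ}. -/
noncomputable def mlDensity (α lam s : ℝ) : ℝ :=
  lam * s ^ (α - 1) * mittagLeffler α (-lam * s ^ α)

/-- F^{α,λ}. -/
noncomputable def mlCDF (α lam x : ℝ) : ℝ :=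
  ∫ s in (0:ℝ)..x, mlDensity α lam s

/-!
Unfolding the recursion gives `y^n_k = ∑_{i ≤ k} ψ_{k-i} ε_i`, where `ψ = ∑_l a^l φ^{*l}` and
`a = a_n`. Hence `E[(y^n_k)²] ≤ ∑_i ψ_i²`, and by Parseval this series is
`∫₀¹ |ψ̂|² = ∫₀¹ |1 - a φ̂|⁻²`.

Since `∑ φ ≤ 1`, the real part of `1 - a φ̂(x)` is at least `a (1 - a + D(x))`, where
`D(x) = Re (φ̂(0) - φ̂(x))` is nonnegative. The tail of order `N^{-1/2}` gives every block
`[N, 2N)` with `N` large a mass of order `N^{-1/2}`, and the block with `N ≈ 1/(4|x|)` yields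
`D(x) ≥ c √|x|` near `0`. Away from `0` the function `D` may have further zeros, because `φ` may be
supported on a proper subgroup of `ℤ`. The inequality `D(x - θ) ≤ 2 D(x) + 2 D(θ)` deals with all of
them at once: if `θ` minimises `D` on a short interval, then
`D(x) ≥ D(x - θ) / 4 ≥ (c / 4) √|x - θ|` on that interval. It remains to bound finitely many
integrals `∫ dx / (b² + q |x - θ|)` with `b = 1 - a`, and each of them is of order `|log b|`.
-/

section ImpulseResponse

variable {φ : ℕ → ℝ} {a : ℝ}

lemma convPow_nonneg (hφ : ∀ i, 0 ≤ φ i) (l i : ℕ) : 0 ≤ convPow φ l i := by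
  induction l generalizing i with
  | zero => simp only [convPow]; positivity
  | succ l ih => exact Finset.sum_nonneg fun j _ => mul_nonneg (ih j) (hφ _)

lemma convPow_eq_zero_of_lt (hφ0 : φ 0 = 0) {l i : ℕ} (hil : i < l) : convPow φ l i = 0 := by
  induction l generalizing i with
  | zero => omega
  | succ l ih =>
    refine Finset.sum_eq_zero fun j _ => ?_
    rcases lt_or_ge j l with hjl | hjl
    · rw [ih hjl, zero_mul]
    · rw [show i - j = 0 by omega, hφ0, mul_zero]

lemma psiSeq_nonneg (hφ : ∀ i, 0 ≤ φ i) (ha : 0 ≤ a) (i : ℕ) : 0 ≤ psiSeq a φ i :=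
  tsum_nonneg fun l => mul_nonneg (pow_nonneg ha l) (convPow_nonneg hφ l i)

lemma psiSeq_eq_sum_range (hφ0 : φ 0 = 0) {i n : ℕ} (hin : i < n) :
    psiSeq a φ i = ∑ l ∈ Finset.range n, a ^ l * convPow φ l i := by
  refine tsum_eq_sum fun l hl => ?_
  rw [Finset.mem_range, not_lt] at hl
  rw [convPow_eq_zero_of_lt hφ0 (hin.trans_le hl), mul_zero]

lemma psiSeq_renewal (hφ0 : φ 0 = 0) (k : ℕ) :
    psiSeq a φ k =
      (if k = 0 then 1 else 0) + a * ∑ j ∈ Finset.range (k + 1), psiSeq a φ j * φ (k - j) := by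
  have hψφ : ∀ j ∈ Finset.range (k + 1), psiSeq a φ j * φ (k - j) =
      ∑ l ∈ Finset.range (k + 1), a ^ l * (convPow φ l j * φ (k - j)) := fun j hj => by
    rw [psiSeq_eq_sum_range hφ0 (Finset.mem_range.1 hj), Finset.sum_mul]
    simp only [mul_assoc]
  rw [psiSeq_eq_sum_range hφ0 (by omega : k < k + 1 + 1), Finset.sum_range_succ',
    Finset.sum_congr rfl hψφ, Finset.sum_comm, Finset.mul_sum, add_comm]
  simp only [convPow, pow_zero, one_mul, pow_succ', mul_assoc, Finset.mul_sum]

lemma one_sub_mul_mk_psiSeq (hφ0 : φ 0 = 0) :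
    (1 - PowerSeries.C a * PowerSeries.mk φ) * PowerSeries.mk (psiSeq a φ) = 1 := by
  ext k
  rw [sub_mul, one_mul, map_sub, mul_right_comm, mul_assoc, PowerSeries.coeff_C_mul,
    PowerSeries.coeff_mul, Finset.Nat.sum_antidiagonal_eq_sum_range_succ_mk,
    PowerSeries.coeff_one]
  simp only [PowerSeries.coeff_mk]
  rw [psiSeq_renewal hφ0 k, add_sub_cancel_right]

lemma summable_psiSeq (hφ : ∀ i, 0 ≤ φ i) (hφ0 : φ 0 = 0) (hs : Summable φ)
    (hφ1 : ∑' i, φ i ≤ 1) (ha : 0 ≤ a) (ha1 : a < 1) : Summable (psiSeq a φ) := by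
  have hψ := psiSeq_nonneg hφ ha
  refine summable_of_sum_range_le (c := 1 / (1 - a)) hψ fun N => ?_
  have hconv : ∑ k ∈ Finset.range N, ∑ j ∈ Finset.range (k + 1), psiSeq a φ j * φ (k - j) ≤
      ∑ j ∈ Finset.range N, psiSeq a φ j := by
    rw [Finset.sum_range_diag_flip N fun j i => psiSeq a φ j * φ i]
    refine Finset.sum_le_sum fun j _ => ?_
    rw [← Finset.mul_sum]
    exact mul_le_of_le_one_right (hψ j) ((hs.sum_le_tsum _ fun i _ => hφ i).trans hφ1)
  have hdelta : ∑ k ∈ Finset.range N, (if k = 0 then (1 : ℝ) else 0) ≤ 1 := by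
    rw [Finset.sum_ite_eq']
    split_ifs <;> norm_num
  have hrenewal : ∑ k ∈ Finset.range N, psiSeq a φ k ≤
      1 + a * ∑ k ∈ Finset.range N, psiSeq a φ k := by
    conv_lhs => rw [Finset.sum_congr rfl fun k _ => psiSeq_renewal hφ0 k, Finset.sum_add_distrib,
      ← Finset.mul_sum]
    gcongr
  rw [le_div_iff₀ (by linarith)]
  linarith

lemma eq_sum_psiSeq_of_autoregressive (hφ0 : φ 0 = 0) {e y : ℕ → ℝ} (hy0 : y 0 = e 0)
    (hy : ∀ k, 1 ≤ k → y k = e k + ∑ i ∈ Finset.Icc 1 k, a * φ i * y (k - i)) (k : ℕ) :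
    y k = ∑ i ∈ Finset.range (k + 1), e i * psiSeq a φ (k - i) := by
  have hrec : PowerSeries.mk y =
      PowerSeries.mk e + PowerSeries.C a * PowerSeries.mk φ * PowerSeries.mk y := by
    ext k
    rw [map_add, mul_assoc, PowerSeries.coeff_C_mul, PowerSeries.coeff_mul,
      Finset.Nat.sum_antidiagonal_eq_sum_range_succ_mk]
    simp only [PowerSeries.coeff_mk]
    rcases Nat.eq_zero_or_pos k with rfl | hk
    · simp [hy0, hφ0]
    · rw [hy k hk, Finset.range_eq_Ico, Finset.sum_eq_sum_Ico_succ_bot k.succ_pos, hφ0, zero_mul,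
        zero_add, Finset.mul_sum, Nat.succ_eq_add_one,
        Finset.Ico_add_one_right_eq_Icc]
      simp only [mul_assoc, zero_add]
  have hsol : PowerSeries.mk y = PowerSeries.mk e * PowerSeries.mk (psiSeq a φ) := by
    linear_combination PowerSeries.mk (psiSeq a φ) * hrec -
      PowerSeries.mk y * one_sub_mul_mk_psiSeq (a := a) hφ0
  have hk := congrArg (PowerSeries.coeff k) hsol
  rw [PowerSeries.coeff_mul, Finset.Nat.sum_antidiagonal_eq_sum_range_succ_mk] at hk
  simpa only [PowerSeries.coeff_mk] using hk

end ImpulseResponse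

section WhiteNoise

variable {Ω ι : Type*} [MeasurableSpace Ω] {P : Measure Ω} {ε : ι → Ω → ℝ}

lemma integral_mul_eq_ite_of_iIndepFun [DecidableEq ι] (hindep : iIndepFun ε P) {i₀ : ι}
    (hid : ∀ i, IdentDistrib (ε i) (ε i₀) P P) (hmean : ∫ ω, ε i₀ ω ∂P = 0)
    (hvar : ∫ ω, ε i₀ ω ^ 2 ∂P = 1) (i j : ι) :
    ∫ ω, ε i ω * ε j ω ∂P = if i = j then 1 else 0 := by
  split_ifs with hij
  · subst hij
    simp only [← sq, (hid i).sq.integral_eq, hvar]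
  · rw [(hindep.indepFun hij).integral_fun_mul_eq_mul_integral
      (hid i).aemeasurable_fst.aestronglyMeasurable (hid j).aemeasurable_fst.aestronglyMeasurable,
      (hid i).integral_eq, hmean, zero_mul]

lemma integral_sq_sum_mul_eq_sum_sq [DecidableEq ι] (hε : ∀ i, MemLp (ε i) 2 P)
    (horth : ∀ i j, ∫ ω, ε i ω * ε j ω ∂P = if i = j then 1 else 0) (s : Finset ι) (c : ι → ℝ) :
    ∫ ω, (∑ i ∈ s, ε i ω * c i) ^ 2 ∂P = ∑ i ∈ s, c i ^ 2 := by
  have hint : ∀ i j, Integrable (fun ω => c i * c j * (ε i ω * ε j ω)) P := fun i j =>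
    ((hε i).integrable_mul (hε j)).const_mul _
  calc ∫ ω, (∑ i ∈ s, ε i ω * c i) ^ 2 ∂P
      = ∫ ω, ∑ i ∈ s, ∑ j ∈ s, c i * c j * (ε i ω * ε j ω) ∂P := by
        congr with ω
        rw [sq, Finset.sum_mul_sum]
        refine Finset.sum_congr rfl fun i _ => Finset.sum_congr rfl fun j _ => by ring
    _ = ∑ i ∈ s, ∑ j ∈ s, c i * c j * if i = j then 1 else 0 := by
        rw [integral_finsetSum _ fun i _ => integrable_finsetSum _ fun j _ => hint i j]
        refine Finset.sum_congr rfl fun i _ => ?_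
        simp only [integral_finsetSum _ fun j _ => hint i j, integral_const_mul, horth]
    _ = ∑ i ∈ s, c i ^ 2 := by
        refine Finset.sum_congr rfl fun i hi => ?_
        simp [hi, sq]

end WhiteNoise

section FourierTransform

lemma hasSum_norm_sq_of_orthonormal {𝕜 E ι : Type*} [RCLike 𝕜] [NormedAddCommGroup E]
    [InnerProductSpace 𝕜 E] {v : ι → E} (hv : Orthonormal 𝕜 v) {c : ι → 𝕜} {G : E}
    (hG : HasSum (fun i => c i • v i) G) : HasSum (fun i => ‖c i‖ ^ 2) (‖G‖ ^ 2) := by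
  refine (hG.norm.pow 2).congr fun s => ?_
  rw [← RCLike.ofReal_inj (K := 𝕜), RCLike.ofReal_pow, ← inner_self_eq_norm_sq_to_K,
    hv.inner_sum]
  simp [RCLike.conj_mul]

lemma norm_toLp_two_sq {X 𝕜 : Type*} [RCLike 𝕜] [TopologicalSpace X] [CompactSpace X]
    [MeasurableSpace X] [BorelSpace X] (μ : Measure X) [IsFiniteMeasure μ] (g : C(X, 𝕜)) :
    ‖ContinuousMap.toLp 2 μ 𝕜 g‖ ^ 2 = ∫ x, ‖g x‖ ^ 2 ∂μ := by
  rw [← RCLike.ofReal_inj (K := 𝕜), RCLike.ofReal_pow, ← inner_self_eq_norm_sq_to_K,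
    ContinuousMap.inner_toLp, ← integral_ofReal]
  simp [RCLike.mul_conj]

lemma exp_neg_eq_fourier (k : ℕ) (x : ℝ) :
    Complex.exp (-(2 * Real.pi * Complex.I * k * x)) =
      fourier (T := 1) (-(k : ℤ)) (x : UnitAddCircle) := by
  rw [fourier_coe_apply]
  push_cast
  ring_nf

lemma norm_exp_neg_two_pi (k : ℕ) (x : ℝ) :
    ‖Complex.exp (-(2 * Real.pi * Complex.I * k * x))‖ = 1 := by
  rw [exp_neg_eq_fourier, fourier_apply, Circle.norm_coe]

lemma summable_norm_fourierSeq {f : ℕ → ℝ} (hf : Summable f) (x : ℝ) :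
    Summable fun k : ℕ => ‖(f k : ℂ) * Complex.exp (-(2 * Real.pi * Complex.I * k * x))‖ := by
  simpa [norm_exp_neg_two_pi] using hf.abs

lemma hasSum_sq_integral_norm_fourierSeq_sq {f : ℕ → ℝ} (hf : Summable f) :
    HasSum (fun k => f k ^ 2) (∫ x in (0 : ℝ)..1, ‖fourierSeq f x‖ ^ 2) := by
  have hsum : Summable fun k : ℕ => (f k : ℂ) • (fourier (T := 1) (-(k : ℤ))) := by
    refine Summable.of_norm ?_
    simpa only [norm_smul, fourier_norm, mul_one, Complex.norm_real] using hf.norm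
  obtain ⟨g, hg⟩ := hsum
  have hgx : ∀ x : ℝ, g (x : UnitAddCircle) = fourierSeq f x := fun x => by
    have := (hg.mapL (ContinuousMap.evalCLM ℂ (x : UnitAddCircle))).tsum_eq
    simpa [fourierSeq, exp_neg_eq_fourier] using this.symm
  have hLp := hg.mapL (ContinuousMap.toLp (E := ℂ) 2 (AddCircle.haarAddCircle (T := 1)) ℂ)
  simp only [map_smul] at hLp
  have hpars := hasSum_norm_sq_of_orthonormal ((orthonormal_fourier (T := 1)).comp
    (fun k : ℕ => -(k : ℤ)) (neg_injective.comp Nat.cast_injective)) hLp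
  have hint := UnitAddCircle.intervalIntegral_preimage 0 fun x => ‖g x‖ ^ 2
  rw [norm_toLp_two_sq, AddCircle.integral_haarAddCircle, inv_one, one_smul, ← hint,
    zero_add] at hpars
  simpa [hgx] using hpars

lemma convolution_mul_exp (f g : ℕ → ℝ) (x : ℝ) (k : ℕ) :
    ((∑ j ∈ Finset.range (k + 1), f j * g (k - j) : ℝ) : ℂ) *
        Complex.exp (-(2 * Real.pi * Complex.I * k * x)) =
      ∑ p ∈ Finset.HasAntidiagonal.antidiagonal k,
        f p.1 * Complex.exp (-(2 * Real.pi * Complex.I * p.1 * x)) *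
          (g p.2 * Complex.exp (-(2 * Real.pi * Complex.I * p.2 * x))) := by
  rw [← Finset.Nat.sum_antidiagonal_eq_sum_range_succ_mk fun p : ℕ × ℕ => f p.1 * g p.2,
    Complex.ofReal_sum, Finset.sum_mul]
  refine Finset.sum_congr rfl fun p hp => ?_
  rw [mul_mul_mul_comm, ← Complex.exp_add, ← Finset.HasAntidiagonal.mem_antidiagonal.1 hp]
  push_cast
  ring_nf

lemma hasSum_fourierSeq_convolution {f g : ℕ → ℝ} (hf : Summable f) (hg : Summable g) (x : ℝ) :
    HasSum (fun k : ℕ => ((∑ j ∈ Finset.range (k + 1), f j * g (k - j) : ℝ) : ℂ) *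
      Complex.exp (-(2 * Real.pi * Complex.I * k * x))) (fourierSeq f x * fourierSeq g x) := by
  have hfn := summable_norm_fourierSeq hf x
  have hgn := summable_norm_fourierSeq hg x
  simp only [convolution_mul_exp, fourierSeq,
    tsum_mul_tsum_eq_tsum_sum_antidiagonal_of_summable_norm hfn hgn]
  exact (summable_norm_sum_mul_antidiagonal_of_summable_norm hfn hgn).of_norm.hasSum

lemma fourierSeq_psiSeq_mul {φ : ℕ → ℝ} {a : ℝ} (hφ0 : φ 0 = 0) (hφ : Summable φ)
    (hψ : Summable (psiSeq a φ)) (x : ℝ) :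
    fourierSeq (psiSeq a φ) x * (1 - a * fourierSeq φ x) = 1 := by
  have himpulse : HasSum (fun k : ℕ => if k = 0 then (1 : ℂ) else 0) 1 := hasSum_ite_eq 0 1
  have hrenewal : fourierSeq (psiSeq a φ) x =
      1 + a * (fourierSeq (psiSeq a φ) x * fourierSeq φ x) := by
    refine HasSum.tsum_eq ((himpulse.add
      ((hasSum_fourierSeq_convolution hψ hφ x).mul_left (a : ℂ))).congr_fun fun k => ?_)
    rw [psiSeq_renewal hφ0 k, Complex.ofReal_add, Complex.ofReal_mul, add_mul, mul_assoc (a : ℂ)]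
    congr 1
    split_ifs with hk <;> simp [hk]
  linear_combination hrenewal

end FourierTransform

section FourierDefect

/-- The defect `Re (φ̂(0) - φ̂(x))` of the Fourier transform of `φ` at `x`, in which the lower bound
for `|1 - a φ̂(x)|` is expressed. It is written as a series of nonnegative terms. -/
noncomputable def fourierDefect (φ : ℕ → ℝ) (x : ℝ) : ℝ :=
  ∑' k : ℕ, φ k * (1 - Real.cos (2 * Real.pi * k * x))

variable {φ : ℕ → ℝ}

lemma fourierDefect_term_nonneg (hφ : ∀ i, 0 ≤ φ i) (x : ℝ) (k : ℕ) :
    0 ≤ φ k * (1 - Real.cos (2 * Real.pi * k * x)) :=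
  mul_nonneg (hφ k) (sub_nonneg.2 (Real.cos_le_one _))

lemma fourierDefect_term_le (hφ : ∀ i, 0 ≤ φ i) (x : ℝ) (k : ℕ) :
    φ k * (1 - Real.cos (2 * Real.pi * k * x)) ≤ φ k * 2 :=
  mul_le_mul_of_nonneg_left (by linarith [Real.neg_one_le_cos (2 * Real.pi * k * x)]) (hφ k)

lemma fourierDefect_nonneg (hφ : ∀ i, 0 ≤ φ i) (x : ℝ) : 0 ≤ fourierDefect φ x :=
  tsum_nonneg (fourierDefect_term_nonneg hφ x)

@[simp]
lemma fourierDefect_abs (x : ℝ) : fourierDefect φ |x| = fourierDefect φ x := by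
  rcases abs_choice x with h | h <;> simp [h, fourierDefect]

lemma summable_fourierDefect (hφ : ∀ i, 0 ≤ φ i) (hs : Summable φ) (x : ℝ) :
    Summable fun k : ℕ => φ k * (1 - Real.cos (2 * Real.pi * k * x)) :=
  .of_nonneg_of_le (fourierDefect_term_nonneg hφ x) (fourierDefect_term_le hφ x) (hs.mul_right 2)

lemma continuous_fourierDefect (hφ : ∀ i, 0 ≤ φ i) (hs : Summable φ) :
    Continuous (fourierDefect φ) := by
  refine continuous_tsum (fun k => by fun_prop) (hs.mul_right 2) fun k x => ?_
  rw [Real.norm_of_nonneg (fourierDefect_term_nonneg hφ x k)]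
  exact fourierDefect_term_le hφ x k

lemma one_sub_cos_sub_le (x y : ℝ) :
    1 - Real.cos (x - y) ≤ 2 * (1 - Real.cos x) + 2 * (1 - Real.cos y) := by
  rw [Real.cos_sub]
  nlinarith [Real.sin_sq_add_cos_sq x, Real.sin_sq_add_cos_sq y,
    sq_nonneg (Real.cos x + Real.cos y - 2), sq_nonneg (Real.sin x + Real.sin y)]

lemma fourierDefect_sub_le (hφ : ∀ i, 0 ≤ φ i) (hs : Summable φ) (x y : ℝ) :
    fourierDefect φ (x - y) ≤ 2 * fourierDefect φ x + 2 * fourierDefect φ y := by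
  have hx := (summable_fourierDefect hφ hs x).mul_left 2
  have hy := (summable_fourierDefect hφ hs y).mul_left 2
  unfold fourierDefect
  rw [← tsum_mul_left, ← tsum_mul_left, ← hx.tsum_add hy]
  refine (summable_fourierDefect hφ hs _).tsum_le_tsum (fun k => ?_) (hx.add hy)
  have hcos := one_sub_cos_sub_le (2 * Real.pi * k * x) (2 * Real.pi * k * y)
  rw [← mul_sub] at hcos
  nlinarith [hφ k]

lemma re_fourierSeq (hs : Summable φ) (x : ℝ) :
    (fourierSeq φ x).re = ∑' k, φ k - fourierDefect φ x := by
  have hre : HasSum (fun k : ℕ => φ k * Real.cos (2 * Real.pi * k * x)) (fourierSeq φ x).re := by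
    refine (Complex.hasSum_re (summable_norm_fourierSeq hs x).of_norm.hasSum).congr_fun fun k => ?_
    rw [Complex.re_ofReal_mul, ← Real.cos_neg, ← Complex.exp_ofReal_mul_I_re]
    push_cast
    ring_nf
  have hdefect := (hs.hasSum.sub hre).tsum_eq
  simp only [fourierDefect, mul_sub, mul_one, hdefect, sub_sub_cancel]

lemma norm_fourierSeq_psiSeq_le (hφ : ∀ i, 0 ≤ φ i) (hφ0 : φ 0 = 0) (hs : Summable φ)
    (hφ1 : ∑' i, φ i ≤ 1) {a : ℝ} (ha : 0 < a) (ha1 : a < 1) (x : ℝ) :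
    ‖fourierSeq (psiSeq a φ) x‖ ≤ a⁻¹ * (1 - a + fourierDefect φ x)⁻¹ := by
  have hD := fourierDefect_nonneg hφ x
  have hpos : 0 < a * (1 - a + fourierDefect φ x) := mul_pos ha (by linarith)
  have hre : a * (1 - a + fourierDefect φ x) ≤ (1 - a * fourierSeq φ x).re := by
    rw [Complex.sub_re, Complex.one_re, Complex.re_ofReal_mul, re_fourierSeq hs]
    nlinarith
  have hinv := fourierSeq_psiSeq_mul hφ0 hs (summable_psiSeq hφ hφ0 hs hφ1 ha.le ha1) x
  rw [eq_inv_of_mul_eq_one_left hinv, norm_inv, ← mul_inv]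
  exact inv_anti₀ hpos (hre.trans (Complex.re_le_norm _))

lemma sum_psiSeq_sq_le (hφ : ∀ i, 0 ≤ φ i) (hφ0 : φ 0 = 0) (hs : Summable φ)
    (hφ1 : ∑' i, φ i ≤ 1) {a : ℝ} (ha : 0 < a) (ha1 : a < 1) (s : Finset ℕ) :
    ∑ k ∈ s, psiSeq a φ k ^ 2 ≤
      (a ^ 2)⁻¹ * ∫ x in (0 : ℝ)..1, ((1 - a + fourierDefect φ x) ^ 2)⁻¹ := by
  have hψ := summable_psiSeq hφ hφ0 hs hφ1 ha.le ha1
  have hcont : Continuous fun x => (a ^ 2)⁻¹ * ((1 - a + fourierDefect φ x) ^ 2)⁻¹ := by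
    have := continuous_fourierDefect hφ hs
    refine continuous_const.mul (Continuous.inv₀ (by fun_prop) fun x => ?_)
    have := fourierDefect_nonneg hφ x
    exact (pow_pos (by linarith) 2).ne'
  have hparseval := hasSum_sq_integral_norm_fourierSeq_sq hψ
  refine (sum_le_hasSum s (fun k _ => sq_nonneg _) hparseval).trans ?_
  rw [← intervalIntegral.integral_const_mul]
  simp only [intervalIntegral.integral_of_le zero_le_one]
  refine integral_mono_of_nonneg (.of_forall fun x => sq_nonneg _)
    (hcont.integrableOn_Icc.mono_set Ioc_subset_Icc_self) (.of_forall fun x => ?_)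
  calc ‖fourierSeq (psiSeq a φ) x‖ ^ 2 ≤ (a⁻¹ * (1 - a + fourierDefect φ x)⁻¹) ^ 2 := by
        gcongr
        exact norm_fourierSeq_psiSeq_le hφ hφ0 hs hφ1 ha ha1 x
    _ = (a ^ 2)⁻¹ * ((1 - a + fourierDefect φ x) ^ 2)⁻¹ := by
        rw [mul_pow, inv_pow, inv_pow]

end FourierDefect

section TailAsymptotics

variable {φ : ℕ → ℝ} {α K : ℝ}

lemma sum_Ico_eq_tsum_add_sub_tsum_add {f : ℕ → ℝ} (hf : Summable f) {m n : ℕ} (hmn : m ≤ n) :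
    ∑ k ∈ Finset.Ico m n, f k = ∑' i, f (m + i) - ∑' i, f (n + i) := by
  have hm := hf.sum_add_tsum_nat_add m
  have hn := hf.sum_add_tsum_nat_add n
  simp only [add_comm _ m, add_comm _ n] at hm hn
  rw [Finset.sum_Ico_eq_sub _ hmn]
  linarith

lemma tendsto_rpow_mul_sum_Ico_two_mul (hs : Summable φ)
    (htail : Tendsto (fun N : ℕ => (N : ℝ) ^ α * ∑' i, φ (N + i)) atTop (nhds K)) :
    Tendsto (fun N : ℕ => (N : ℝ) ^ α * ∑ k ∈ Finset.Ico N (2 * N), φ k) atTop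
      (nhds (K - 2 ^ (-α) * K)) := by
  have hdouble : Tendsto (fun N : ℕ => 2 * N) atTop atTop :=
    tendsto_id.const_mul_atTop' two_pos
  refine (htail.sub ((htail.comp hdouble).const_mul (2 ^ (-α)))).congr fun N => ?_
  rw [sum_Ico_eq_tsum_add_sub_tsum_add hs (by omega : N ≤ 2 * N), mul_sub, Function.comp_apply,
    Nat.cast_mul, Nat.cast_two, Real.mul_rpow two_pos.le N.cast_nonneg, ← mul_assoc, ← mul_assoc,
    ← Real.rpow_add two_pos, neg_add_cancel, Real.rpow_zero, one_mul]

lemma exists_eventually_lt_rpow_mul_sum_Ico_two_mul (hs : Summable φ) (hα : 0 < α) (hK : 0 < K)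
    (htail : Tendsto (fun N : ℕ => (N : ℝ) ^ α * ∑' i, φ (N + i)) atTop (nhds K)) :
    ∃ L > 0, ∀ᶠ N : ℕ in atTop, L < (N : ℝ) ^ α * ∑ k ∈ Finset.Ico N (2 * N), φ k := by
  have hlimit : 0 < K - 2 ^ (-α) * K := by
    have : (2 : ℝ) ^ (-α) < 1 := Real.rpow_lt_one_of_one_lt_of_neg one_lt_two (neg_lt_zero.2 hα)
    nlinarith
  obtain ⟨L, hL, hL'⟩ := exists_between hlimit
  exact ⟨L, hL, (tendsto_rpow_mul_sum_Ico_two_mul hs htail).eventually (lt_mem_nhds hL')⟩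

lemma sum_Ico_two_mul_le_fourierDefect (hφ : ∀ i, 0 ≤ φ i) (hs : Summable φ) {N : ℕ} {x : ℝ}
    (hx : 0 ≤ x) (hlow : 1 / 8 ≤ N * x) (hhigh : N * x ≤ 1 / 4) :
    1 / 8 * ∑ k ∈ Finset.Ico N (2 * N), φ k ≤ fourierDefect φ x := by
  refine le_trans ?_ ((summable_fourierDefect hφ hs x).sum_le_tsum (Finset.Ico N (2 * N))
    fun k _ => fourierDefect_term_nonneg hφ x k)
  rw [Finset.mul_sum]
  refine Finset.sum_le_sum fun k hk => ?_
  rw [Finset.mem_Ico] at hk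
  have hNk : (N : ℝ) ≤ k := by exact_mod_cast hk.1
  have hkN : (k : ℝ) ≤ 2 * N := by exact_mod_cast hk.2.le
  have hkx_low : 1 / 8 ≤ k * x := hlow.trans (by gcongr)
  have hkx_high : k * x ≤ 1 / 2 := by nlinarith
  have hcos := Real.cos_le_one_sub_mul_cos_sq (x := 2 * Real.pi * k * x) (by
    rw [abs_of_nonneg (by positivity)]
    nlinarith [Real.pi_pos])
  rw [show 2 / Real.pi ^ 2 * (2 * Real.pi * k * x) ^ 2 = 8 * (k * x) ^ 2 by field_simp; ring]
    at hcos
  rw [mul_comm]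
  exact mul_le_mul_of_nonneg_left (by nlinarith) (hφ k)

lemma exists_nat_mul_mem_Icc {t : ℝ} (ht : 0 < t) {N₀ : ℕ} (hN₀ : (N₀ + 1) * t ≤ 1) :
    ∃ N ≥ N₀, N * t ∈ Icc (1 / 2) 1 := by
  have hge : N₀ + 1 ≤ ⌊1 / t⌋₊ := Nat.le_floor (by
    rw [le_div_iff₀ ht]
    exact_mod_cast hN₀)
  have hle : (⌊1 / t⌋₊ : ℝ) ≤ 1 / t := Nat.floor_le (by positivity)
  have hlt : 1 / t < ⌊1 / t⌋₊ + 1 := Nat.lt_floor_add_one _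
  have hone : (1 : ℝ) ≤ ⌊1 / t⌋₊ := by exact_mod_cast (by omega : 1 ≤ ⌊1 / t⌋₊)
  rw [le_div_iff₀ ht] at hle
  rw [div_lt_iff₀ ht] at hlt
  exact ⟨⌊1 / t⌋₊, by omega, by nlinarith, hle⟩

lemma exists_eventually_rpow_le_fourierDefect (hφ : ∀ i, 0 ≤ φ i) (hs : Summable φ)
    (hα : 0 < α) (hK : 0 < K)
    (htail : Tendsto (fun N : ℕ => (N : ℝ) ^ α * ∑' i, φ (N + i)) atTop (nhds K)) :
    ∃ c > 0, ∀ᶠ x in nhds (0 : ℝ), c * |x| ^ α ≤ fourierDefect φ x := by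
  obtain ⟨L, hL, hblock⟩ := exists_eventually_lt_rpow_mul_sum_Ico_two_mul hs hα hK htail
  obtain ⟨N₀, hN₀⟩ := eventually_atTop.1 hblock
  refine ⟨1 / 8 * L * 4 ^ α, by positivity, ?_⟩
  rw [Metric.eventually_nhds_iff]
  refine ⟨1 / (4 * (N₀ + 1)), by positivity, fun x hx => ?_⟩
  rw [dist_zero_right, Real.norm_eq_abs, lt_div_iff₀ (by positivity)] at hx
  rw [← fourierDefect_abs]
  rcases (abs_nonneg x).eq_or_lt with hx0 | hx0
  · rw [← hx0, Real.zero_rpow hα.ne', mul_zero]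
    exact fourierDefect_nonneg hφ 0
  obtain ⟨N, hN, hN_low, hN_high⟩ :=
    exists_nat_mul_mem_Icc (t := 4 * |x|) (N₀ := N₀) (by positivity) (by linarith)
  have hblock_x : L * (4 * |x|) ^ α ≤ ∑ k ∈ Finset.Ico N (2 * N), φ k := by
    calc L * (4 * |x|) ^ α
        ≤ ((N : ℝ) ^ α * ∑ k ∈ Finset.Ico N (2 * N), φ k) * (4 * |x|) ^ α := by
          gcongr
          exact (hN₀ N hN).le
      _ = (N * (4 * |x|)) ^ α * ∑ k ∈ Finset.Ico N (2 * N), φ k := by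
          rw [Real.mul_rpow N.cast_nonneg (by positivity)]
          ring
      _ ≤ ∑ k ∈ Finset.Ico N (2 * N), φ k :=
          mul_le_of_le_one_left (Finset.sum_nonneg fun k _ => hφ k)
            (Real.rpow_le_one (by positivity) hN_high hα.le)
  calc 1 / 8 * L * 4 ^ α * |x| ^ α = 1 / 8 * (L * (4 * |x|) ^ α) := by
        rw [Real.mul_rpow (by norm_num) hx0.le]
        ring
    _ ≤ 1 / 8 * ∑ k ∈ Finset.Ico N (2 * N), φ k := by gcongr
    _ ≤ fourierDefect φ |x| :=
        sum_Ico_two_mul_le_fourierDefect hφ hs hx0.le (by linarith) (by linarith)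

end TailAsymptotics

section Integrals

lemma integral_inv_add_mul {B q : ℝ} (hB : 0 < B) (hq : 0 < q) {r : ℝ} (hr : 0 ≤ r) :
    ∫ u in (0 : ℝ)..r, (B + q * u)⁻¹ = q⁻¹ * Real.log ((B + q * r) / B) := by
  rw [intervalIntegral.integral_comp_add_mul (fun u => u⁻¹) hq.ne', mul_zero, add_zero,
    integral_inv_of_pos hB (by positivity), smul_eq_mul]

lemma integral_comp_abs_symm {f : ℝ → ℝ} (hf : Continuous fun u => f |u|) {r : ℝ} (hr : 0 ≤ r) :
    ∫ u in -r..r, f |u| = 2 * ∫ u in (0 : ℝ)..r, f u := by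
  have hright : ∫ u in (0 : ℝ)..r, f |u| = ∫ u in (0 : ℝ)..r, f u :=
    intervalIntegral.integral_congr fun u hu => by
      rw [uIcc_of_le hr] at hu
      simp only [abs_of_nonneg hu.1]
  have hleft : ∫ u in -r..0, f |u| = ∫ u in (0 : ℝ)..r, f |u| := by
    simpa using intervalIntegral.integral_comp_neg (a := -r) (b := 0) fun u => f |u|
  have hint : ∀ s t, IntervalIntegrable (fun u => f |u|) volume s t :=
    hf.intervalIntegrable
  rw [← intervalIntegral.integral_add_adjacent_intervals (hint (-r) 0) (hint 0 r), hleft, hright,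
    two_mul]

lemma integral_inv_add_mul_abs_sub_le {B q : ℝ} (hB : 0 < B) (hq : 0 < q) {r s t θ : ℝ}
    (hθ : θ ∈ Icc s t) (hr : t - s ≤ r) :
    ∫ x in s..t, (B + q * |x - θ|)⁻¹ ≤ 2 * (q⁻¹ * Real.log ((B + q * r) / B)) := by
  have hr0 : 0 ≤ r := by linarith [hθ.1, hθ.2]
  have hcont : Continuous fun u => (B + q * |u|)⁻¹ :=
    Continuous.inv₀ (by fun_prop) fun u => by positivity
  calc ∫ x in s..t, (B + q * |x - θ|)⁻¹
      = ∫ u in s - θ..t - θ, (B + q * |u|)⁻¹ :=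
        intervalIntegral.integral_comp_sub_right (fun u => (B + q * |u|)⁻¹) θ
    _ ≤ ∫ u in -r..r, (B + q * |u|)⁻¹ :=
        intervalIntegral.integral_mono_interval (by linarith [hθ.2]) (by linarith [hθ.1, hθ.2])
          (by linarith [hθ.1]) (.of_forall fun u => by positivity) (hcont.intervalIntegrable _ _)
    _ = 2 * (q⁻¹ * Real.log ((B + q * r) / B)) := by
        rw [integral_comp_abs_symm (f := fun u => (B + q * u)⁻¹) hcont hr0,
          integral_inv_add_mul hB hq hr0]

variable {H : ℝ → ℝ} {c r : ℝ}

lemma integral_inv_add_sq_le_of_sqrt_le (hH : Continuous H)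
    (hsub : ∀ x y, H (x - y) ≤ 2 * H x + 2 * H y) (hc : 0 < c)
    (hgrowth : ∀ x, |x| ≤ r → c * √|x| ≤ H x) {b : ℝ} (hb : 0 < b) {s t : ℝ} (hst : s ≤ t)
    (hr : t - s ≤ r) :
    ∫ x in s..t, ((b + H x) ^ 2)⁻¹ ≤
      2 * (((c / 4) ^ 2)⁻¹ * Real.log ((b ^ 2 + (c / 4) ^ 2 * r) / b ^ 2)) := by
  obtain ⟨θ, hθ, hmin⟩ := isCompact_Icc.exists_isMinOn (nonempty_Icc.2 hst) hH.continuousOn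
  have hgrowth_θ : ∀ x ∈ Icc s t, c / 4 * √|x - θ| ≤ H x := fun x hx => by
    have hxθ : |x - θ| ≤ r := abs_le.2 ⟨by linarith [hx.1, hθ.2], by linarith [hx.2, hθ.1]⟩
    have hθx : H θ ≤ H x := hmin hx
    linarith [hgrowth (x - θ) hxθ, hsub x θ]
  have hH0 : ∀ x ∈ Icc s t, 0 ≤ H x := fun x hx => le_trans (by positivity) (hgrowth_θ x hx)
  refine le_trans (intervalIntegral.integral_mono_on hst ?_ ?_ fun x hx => ?_)
    (integral_inv_add_mul_abs_sub_le (by positivity) (by positivity) hθ hr)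
  · refine ContinuousOn.intervalIntegrable_of_Icc hst
      (ContinuousOn.inv₀ (by fun_prop) fun x hx => ?_)
    have := hH0 x hx
    positivity
  · exact (Continuous.inv₀ (by fun_prop) fun x => by positivity).intervalIntegrable _ _
  · refine inv_anti₀ (by positivity) ?_
    calc b ^ 2 + (c / 4) ^ 2 * |x - θ| = b ^ 2 + (c / 4 * √|x - θ|) ^ 2 := by
          rw [mul_pow, Real.sq_sqrt (abs_nonneg _)]
      _ ≤ b ^ 2 + H x ^ 2 := by
          gcongr
          exact hgrowth_θ x hx
      _ ≤ (b + H x) ^ 2 := by nlinarith [mul_nonneg hb.le (hH0 x hx)]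

lemma exists_log_add_div_sq_le {q b₀ : ℝ} (hq : 0 < q) (hb₀ : b₀ < 1) :
    ∃ C > 0, ∀ b ∈ Ioc 0 b₀, Real.log ((b ^ 2 + q) / b ^ 2) ≤ C * |Real.log b| := by
  rcases le_or_gt b₀ 0 with h | h
  · exact ⟨1, one_pos, fun b hb => absurd (hb.1.trans_le hb.2) h.not_gt⟩
  have hl₀ : 0 < -Real.log b₀ := neg_pos.2 (Real.log_neg h hb₀)
  have hlq : 0 < Real.log (1 + q) := Real.log_pos (by linarith)
  refine ⟨Real.log (1 + q) / -Real.log b₀ + 2, by positivity, fun b hb => ?_⟩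
  have hb0 : 0 < b := hb.1
  have hlog : -Real.log b₀ ≤ |Real.log b| :=
    (neg_le_neg (Real.log_le_log hb0 hb.2)).trans (neg_le_abs _)
  have hb1 : b ^ 2 ≤ 1 := pow_le_one₀ hb0.le (hb.2.trans hb₀.le)
  calc Real.log ((b ^ 2 + q) / b ^ 2) = Real.log (b ^ 2 + q) - 2 * Real.log b := by
        rw [Real.log_div (by positivity) (by positivity), Real.log_pow, Nat.cast_two]
    _ ≤ Real.log (1 + q) + 2 * |Real.log b| := by
        have := Real.log_le_log (by positivity) (by linarith : b ^ 2 + q ≤ 1 + q)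
        linarith [neg_le_abs (Real.log b)]
    _ ≤ Real.log (1 + q) / -Real.log b₀ * |Real.log b| + 2 * |Real.log b| := by
        gcongr
        rw [div_mul_eq_mul_div, le_div_iff₀ hl₀]
        gcongr
    _ = (Real.log (1 + q) / -Real.log b₀ + 2) * |Real.log b| := by ring

lemma integral_le_of_forall_short_integral_le {f : ℝ → ℝ}
    (hf : ∀ s t, IntervalIntegrable f volume s t) (m : ℕ) {M : ℝ}
    (hM : ∀ s t : ℝ, s ≤ t → t - s ≤ 1 / (m + 1) → ∫ x in s..t, f x ≤ M) :
    ∫ x in (0 : ℝ)..1, f x ≤ (m + 1) * M := by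
  have hsplit := intervalIntegral.sum_integral_adjacent_intervals (n := m + 1)
    (a := fun j : ℕ => (j : ℝ) / (m + 1)) fun j _ => hf _ _
  have hend : ((m + 1 : ℕ) : ℝ) / (m + 1) = 1 := by
    push_cast
    field_simp
  simp only [hend, Nat.cast_zero, zero_div] at hsplit
  calc ∫ x in (0 : ℝ)..1, f x ≤ ∑ _j ∈ Finset.range (m + 1), M := by
        rw [← hsplit]
        refine Finset.sum_le_sum fun _ _ => hM _ _ (by gcongr; simp) (le_of_eq ?_)
        push_cast
        ring
    _ = (m + 1) * M := by
        rw [Finset.sum_const, Finset.card_range, nsmul_eq_mul]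
        push_cast
        ring

lemma exists_integral_inv_add_sq_le_abs_log (hH : Continuous H)
    (hsub : ∀ x y, H (x - y) ≤ 2 * H x + 2 * H y) (hc : 0 < c)
    (hgrowth : ∀ᶠ x in nhds 0, c * √|x| ≤ H x) {b₀ : ℝ} (hb₀ : b₀ < 1) :
    ∃ C > 0, ∀ b ∈ Ioc 0 b₀, ∫ x in (0 : ℝ)..1, ((b + H x) ^ 2)⁻¹ ≤ C * |Real.log b| := by
  have hH0 (x : ℝ) : 0 ≤ H x := by
    have h0 := hsub 0 0
    have hx := hsub x x
    rw [sub_self] at h0 hx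
    linarith
  obtain ⟨r, hr, hgrowth_r⟩ := Metric.eventually_nhds_iff.1 hgrowth
  obtain ⟨m, hm⟩ := exists_nat_one_div_lt hr
  simp only [dist_zero_right, Real.norm_eq_abs] at hgrowth_r
  obtain ⟨C, hC, hlog⟩ :=
    exists_log_add_div_sq_le (q := (c / 4) ^ 2 * (1 / (m + 1))) (by positivity) hb₀
  refine ⟨(m + 1) * (2 * (((c / 4) ^ 2)⁻¹ * C)), by positivity, fun b hb => ?_⟩
  have hb0 : 0 < b := hb.1
  have hint : ∀ s t, IntervalIntegrable (fun x => ((b + H x) ^ 2)⁻¹) volume s t :=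
    (Continuous.inv₀ (by fun_prop) fun x => by
      have := hH0 x
      positivity).intervalIntegrable
  have hshort : ∀ s t : ℝ, s ≤ t → t - s ≤ 1 / (m + 1) →
      ∫ x in s..t, ((b + H x) ^ 2)⁻¹ ≤ 2 * (((c / 4) ^ 2)⁻¹ * (C * |Real.log b|)) :=
    fun s t hst hts => by
      refine (integral_inv_add_sq_le_of_sqrt_le hH hsub hc
        (fun x hx => hgrowth_r (hx.trans_lt hm)) hb0 hst hts).trans ?_
      gcongr
      exact hlog b hb
  refine (integral_le_of_forall_short_integral_le hint m hshort).trans_eq ?_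
  ring

end Integrals

section RealSequences

lemma tendsto_zero_of_natCast_rpow_mul {u : ℕ → ℝ} {α l : ℝ} (hα : 0 < α)
    (hu : Tendsto (fun n : ℕ => (n : ℝ) ^ α * u n) atTop (nhds l)) :
    Tendsto u atTop (nhds 0) :=
  tendsto_zero_of_isBoundedUnder_smul_of_tendsto_cobounded hu.norm.isBoundedUnder_le
    (((tendsto_rpow_atTop hα).comp tendsto_natCast_atTop_atTop).mono_right
      IsOrderBornology.atTop_le_cobounded)

lemma exists_pos_forall_le_of_tendsto {u : ℕ → ℝ} {l : ℝ} (hpos : ∀ n, 0 < u n) (hl : 0 < l)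
    (hu : Tendsto u atTop (nhds l)) : ∃ r > 0, ∀ n, r ≤ u n := by
  obtain ⟨M, hM⟩ := (hu.inv₀ hl.ne').bddAbove_range
  have hM' (n : ℕ) : (u n)⁻¹ ≤ M := hM (mem_range_self n)
  exact ⟨M⁻¹, inv_pos.2 ((inv_pos.2 (hpos 0)).trans_le (hM' 0)),
    fun n => inv_le_of_inv_le₀ (hpos n) (hM' n)⟩

end RealSequences

section SecondMoment

variable {φ : ℕ → ℝ} {K a₀ : ℝ}

lemma exists_sum_psiSeq_sq_le_abs_log (hφ : ∀ i, 0 ≤ φ i) (hφ0 : φ 0 = 0) (hs : Summable φ)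
    (hφ1 : ∑' i, φ i ≤ 1) (hK : 0 < K)
    (htail : Tendsto (fun N : ℕ => (N : ℝ) ^ (1 / 2 : ℝ) * ∑' i, φ (N + i)) atTop (nhds K))
    (ha₀ : 0 < a₀) :
    ∃ c > 0, ∀ a ∈ Ico a₀ 1, ∀ s : Finset ℕ,
      ∑ k ∈ s, psiSeq a φ k ^ 2 ≤ c * |Real.log (1 - a)| := by
  obtain ⟨c, hc, hgrowth⟩ :=
    exists_eventually_rpow_le_fourierDefect hφ hs (by norm_num) hK htail
  simp only [← Real.sqrt_eq_rpow] at hgrowth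
  obtain ⟨C, hC, hintegral⟩ := exists_integral_inv_add_sq_le_abs_log
    (continuous_fourierDefect hφ hs) (fourierDefect_sub_le hφ hs) hc hgrowth (sub_lt_self 1 ha₀)
  refine ⟨(a₀ ^ 2)⁻¹ * C, by positivity, fun a ha s => ?_⟩
  calc ∑ k ∈ s, psiSeq a φ k ^ 2
      ≤ (a ^ 2)⁻¹ * ∫ x in (0 : ℝ)..1, ((1 - a + fourierDefect φ x) ^ 2)⁻¹ :=
        sum_psiSeq_sq_le hφ hφ0 hs hφ1 (ha₀.trans_le ha.1) ha.2 s
    _ ≤ (a ^ 2)⁻¹ * (C * |Real.log (1 - a)|) := by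
        gcongr
        exact hintegral (1 - a) ⟨sub_pos.2 ha.2, by linarith [ha.1]⟩
    _ ≤ (a₀ ^ 2)⁻¹ * (C * |Real.log (1 - a)|) := by
        gcongr
        exact ha.1
    _ = (a₀ ^ 2)⁻¹ * C * |Real.log (1 - a)| := by rw [mul_assoc]

theorem ar_second_moment_bound_critical_general {Ω : Type*} [MeasurableSpace Ω] (P : Measure Ω)
    (hφ : ∀ i, 0 ≤ φ i) (hφ0 : φ 0 = 0) (hs : Summable φ) (hφ1 : ∑' i, φ i ≤ 1) (hK : 0 < K)
    (htail : Tendsto (fun N : ℕ => (N : ℝ) ^ (1 / 2 : ℝ) * ∑' i, φ (N + i)) atTop (nhds K))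
    (ha₀ : 0 < a₀) {ε : ℕ → Ω → ℝ} (hε : ∀ k, MemLp (ε k) 2 P)
    (horth : ∀ i j, ∫ ω, ε i ω * ε j ω ∂P = if i = j then 1 else 0) :
    ∃ c > 0, ∀ a ∈ Ico a₀ 1, ∀ y : ℕ → Ω → ℝ, y 0 = ε 0 →
      (∀ k, 1 ≤ k → ∀ ω, y k ω = ε k ω + ∑ i ∈ Finset.Icc 1 k, a * φ i * y (k - i) ω) →
      ∀ k, ∫ ω, y k ω ^ 2 ∂P ≤ c * |Real.log (1 - a)| := by
  obtain ⟨c, hc, hψ⟩ := exists_sum_psiSeq_sq_le_abs_log hφ hφ0 hs hφ1 hK htail ha₀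
  refine ⟨c, hc, fun a ha y hy0 hy k => ?_⟩
  have hmoving (ω : Ω) : y k ω = ∑ i ∈ Finset.range (k + 1), ε i ω * psiSeq a φ (k - i) :=
    eq_sum_psiSeq_of_autoregressive (e := (ε · ω)) (y := (y · ω)) hφ0 (congrFun hy0 ω)
      (fun k hk => hy k hk ω) k
  calc ∫ ω, y k ω ^ 2 ∂P = ∑ i ∈ Finset.range (k + 1), psiSeq a φ (k - i) ^ 2 := by
        simp only [hmoving]
        exact integral_sq_sum_mul_eq_sum_sq hε horth _ _
    _ = ∑ i ∈ Finset.range (k + 1), psiSeq a φ i ^ 2 :=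
        Finset.sum_range_reflect (fun i => psiSeq a φ i ^ 2) (k + 1)
    _ ≤ c * |Real.log (1 - a)| := hψ a ha _

end SecondMoment

/-- intermediate bound in the critical case:
`E[(y^n_k)²] ≤ c |log(1−a_n)|`. -/
theorem ar_second_moment_bound_critical
    {Ω : Type*} [MeasurableSpace Ω] (P : Measure Ω) [IsProbabilityMeasure P]
    (φ : ℕ → ℝ) (hφnn : ∀ i, 0 ≤ φ i) (hφ0 : φ 0 = 0) (hφsum : ∑' i : ℕ, φ i = 1)
    (K : ℝ) (hK : 0 < K)
    (htail : Tendsto (fun N : ℕ => (N : ℝ) ^ (1/2 : ℝ) * ∑' i : ℕ, φ (N + i))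
      atTop (nhds K))
    (δ : ℝ) (hδ : δ = K * Real.Gamma (1/2) / (1/2))
    (a : ℕ → ℝ) (ha : ∀ n, 1 ≤ n → 0 < a n ∧ a n < 1)
    (lam : ℝ) (hlam : 0 < lam)
    (haconv : Tendsto (fun n : ℕ => (n : ℝ) ^ (1/2 : ℝ) * (1 - a n))
      atTop (nhds (lam * δ)))
    -- the `ε_k` are iid, square integrable, centered with unit variance
    (ε : ℕ → Ω → ℝ) (hεmeas : ∀ k, Measurable (ε k))
    (hεindep : iIndepFun ε P)
    (hεid : ∀ k, Measure.map (ε k) P = Measure.map (ε 0) P)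
    (hεL2 : MemLp (ε 0) 2 P)
    (hεmean : ∫ ω, ε 0 ω ∂P = 0)
    (hεvar : ∫ ω, (ε 0 ω) ^ 2 ∂P = 1)
    (y : ℕ → ℕ → Ω → ℝ)
    (hy0 : ∀ n, y n 0 = ε 0)
    (hyrec : ∀ n k, 1 ≤ k → ∀ ω,
      y n k ω = ε k ω + ∑ i ∈ Finset.Icc 1 k, a n * φ i * y n (k - i) ω)
    : ∃ c > 0, ∀ n, 1 ≤ n → ∀ k : ℕ,
        ∫ ω, (y n k ω) ^ 2 ∂P ≤ c * |Real.log (1 - a n)| := by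
  have hs : Summable φ := by
    by_contra h
    rw [tsum_eq_zero_of_not_summable h] at hφsum
    exact zero_ne_one hφsum
  have ha_one : Tendsto a atTop (nhds 1) := by
    simpa using (tendsto_zero_of_natCast_rpow_mul one_half_pos haconv).const_sub 1
  obtain ⟨a₀, ha₀, ha_ge⟩ := exists_pos_forall_le_of_tendsto (u := fun n => a (n + 1))
    (fun n => (ha _ (Nat.le_add_left 1 n)).1) one_pos (ha_one.comp (tendsto_add_atTop_nat 1))
  have hid (k : ℕ) : IdentDistrib (ε k) (ε 0) P P :=
    ⟨(hεmeas k).aemeasurable, (hεmeas 0).aemeasurable, hεid k⟩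
  obtain ⟨c, hc, hbound⟩ := ar_second_moment_bound_critical_general P hφnn hφ0 hs hφsum.le hK htail
    ha₀ (fun k => (hid k).symm.memLp_snd hεL2)
    (integral_mul_eq_ite_of_iIndepFun hεindep hid hεmean hεvar)
  refine ⟨c, hc, fun n hn => hbound (a n) ⟨?_, (ha n hn).2⟩ (y n) (hy0 n) (hyrec n)⟩
  simpa [Nat.sub_add_cancel hn] using ha_ge (n - 1)
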